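/- arXiv:1209.3577 — 3 statements merged into one kernel-verified Lean document; each statement's English description precedes it below -/
import Mathlib

section
/- For every real number x > 0 that is not an integer, the function ε₁ is differentiable at x, the function φ₂ is differentiable at x, and ε₁'(x) = (1 − φ₂'(x))². -/
/-- `φ₂(x) = x - 1 - ({x}² - {x})/x`. -/
noncomputable def phi2 (x : ℝ) : ℝ := x - 1 - (Int.fract x ^ 2 - Int.fract x) / x

/-- `ε₁(x) = 1/3 - 1/(3x) + (4/3)({x}³ - (3/2){x}² + (1/2){x})/x²
             - (1/3)({x}⁴ - 2{x}³ + {x}²)/x³`. -/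
noncomputable def eps1 (x : ℝ) : ℝ :=
  1 / 3 - 1 / (3 * x)
    + (4 / 3) * (Int.fract x ^ 3 - (3 / 2) * Int.fract x ^ 2 + (1 / 2) * Int.fract x) / x ^ 2
    - (1 / 3) * (Int.fract x ^ 4 - 2 * Int.fract x ^ 3 + Int.fract x ^ 2) / x ^ 3

/-!
Off the integers `{y}` has derivative `1`, so `g = {y}² - {y}` and `h = 2{y} - 1` satisfy `g' = h`
and `h' = 2`, and `1 - φ₂' = (g / y)'`. For any `g` and `h` with these derivatives,
`2 g h / y² - g² / y³` has derivative `3 ((g / y)')² - (h² - 4 g) / y²`. Here the discriminant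
`h² - 4 g` is `1`, and the term `-1 / (3 y)` of `ε₁` cancels its contribution.
-/

open Filter Topology

section Fract

theorem ne_zero_of_ne_floor {α : Type*} [Ring α] [LinearOrder α] [IsStrictOrderedRing α]
    [FloorRing α] {x : α} (hx : x ≠ ⌊x⌋) : x ≠ 0 := by
  rintro rfl
  simp at hx

theorem eventually_floor_eq {α : Type*} [Ring α] [LinearOrder α] [IsStrictOrderedRing α]
    [FloorRing α] [TopologicalSpace α] [OrderClosedTopology α] {x : α} (hx : x ≠ ⌊x⌋) :
    ∀ᶠ y in 𝓝 x, ⌊y⌋ = ⌊x⌋ := by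
  have floor_lt : (⌊x⌋ : α) < x := (Int.floor_le x).lt_of_ne' hx
  filter_upwards [Ico_mem_nhds floor_lt (Int.lt_floor_add_one x)] with y hy
  exact Int.floor_eq_on_Ico _ y hy

variable {𝕜 : Type*} [NontriviallyNormedField 𝕜] [LinearOrder 𝕜] [IsStrictOrderedRing 𝕜]
  [FloorRing 𝕜] [OrderClosedTopology 𝕜] {x : 𝕜}

theorem hasDerivAt_fract (hx : x ≠ ⌊x⌋) : HasDerivAt (Int.fract : 𝕜 → 𝕜) 1 x := by
  refine ((hasDerivAt_id' x).sub_const (⌊x⌋ : 𝕜)).congr_of_eventuallyEq ?_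
  filter_upwards [eventually_floor_eq hx] with y hy
  rw [← hy, Int.self_sub_floor]

theorem hasDerivAt_fract_sq_sub_fract (hx : x ≠ ⌊x⌋) :
    HasDerivAt (fun y : 𝕜 ↦ Int.fract y ^ 2 - Int.fract y) (2 * Int.fract x - 1) x := by
  simpa using ((hasDerivAt_fract hx).fun_pow 2).fun_sub (hasDerivAt_fract hx)

theorem hasDerivAt_two_mul_fract_sub_one (hx : x ≠ ⌊x⌋) :
    HasDerivAt (fun y : 𝕜 ↦ 2 * Int.fract y - 1) 2 x := by
  simpa using ((hasDerivAt_fract hx).const_mul 2).sub_const 1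

end Fract

section DivById

variable {𝕜 : Type*} [NontriviallyNormedField 𝕜] {g h : 𝕜 → 𝕜} {x : 𝕜}

theorem hasDerivAt_div_id {g' : 𝕜} (hx : x ≠ 0) (hg : HasDerivAt g g' x) :
    HasDerivAt (fun y ↦ g y / y) (g' / x - g x / x ^ 2) x := by
  refine (hg.fun_div (hasDerivAt_id' x) hx).congr_deriv ?_
  field_simp

theorem hasDerivAt_two_mul_mul_div_sq_sub_sq_div_cube {c : 𝕜} (hx : x ≠ 0)
    (hg : HasDerivAt g (h x) x) (hh : HasDerivAt h c x) :
    HasDerivAt (fun y ↦ 2 * (g y * h y) / y ^ 2 - g y ^ 2 / y ^ 3)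
      (3 * (h x / x - g x / x ^ 2) ^ 2 - (h x ^ 2 - 2 * c * g x) / x ^ 2) x := by
  have deriv_mul_div_sq : HasDerivAt (fun y ↦ 2 * (g y * h y) / y ^ 2)
      (2 * (h x ^ 2 + c * g x) / x ^ 2 - 4 * (g x * h x) / x ^ 3) x := by
    refine (((hg.fun_mul hh).const_mul 2).fun_div (hasDerivAt_pow 2 x)
      (pow_ne_zero 2 hx)).congr_deriv ?_
    field_simp
    ring
  have deriv_sq_div_cube : HasDerivAt (fun y ↦ g y ^ 2 / y ^ 3)
      (2 * (g x * h x) / x ^ 3 - 3 * g x ^ 2 / x ^ 4) x := by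
    refine ((hg.fun_pow 2).fun_div (hasDerivAt_pow 3 x) (pow_ne_zero 3 hx)).congr_deriv ?_
    field_simp
    ring
  refine (deriv_mul_div_sq.fun_sub deriv_sq_div_cube).congr_deriv ?_
  field_simp
  ring

end DivById

section PhiEps

variable {x : ℝ}

theorem hasDerivAt_phi2 (hx : x ≠ ⌊x⌋) :
    HasDerivAt phi2
      (1 - ((2 * Int.fract x - 1) / x - (Int.fract x ^ 2 - Int.fract x) / x ^ 2)) x :=
  ((hasDerivAt_id' x).sub_const 1).fun_sub
    (hasDerivAt_div_id (ne_zero_of_ne_floor hx) (hasDerivAt_fract_sq_sub_fract hx))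

theorem eps1_eq (y : ℝ) :
    eps1 y = (1 - y⁻¹ +
      (2 * ((Int.fract y ^ 2 - Int.fract y) * (2 * Int.fract y - 1)) / y ^ 2
        - (Int.fract y ^ 2 - Int.fract y) ^ 2 / y ^ 3)) / 3 := by
  unfold eps1
  ring

theorem hasDerivAt_eps1 (hx : x ≠ ⌊x⌋) :
    HasDerivAt eps1
      (((2 * Int.fract x - 1) / x - (Int.fract x ^ 2 - Int.fract x) / x ^ 2) ^ 2) x := by
  have hx₀ := ne_zero_of_ne_floor hx
  rw [funext eps1_eq]
  refine ((((hasDerivAt_inv hx₀).const_sub 1).fun_add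
    (hasDerivAt_two_mul_mul_div_sq_sub_sq_div_cube hx₀ (hasDerivAt_fract_sq_sub_fract hx)
      (hasDerivAt_two_mul_fract_sub_one hx))).div_const 3).congr_deriv ?_
  have discriminant_eq_one :
      (2 * Int.fract x - 1) ^ 2 - 2 * 2 * (Int.fract x ^ 2 - Int.fract x) = 1 := by ring
  rw [discriminant_eq_one]
  ring

end PhiEps

theorem eps1_deriv_general (x : ℝ) (hxi : ∀ n : ℤ, x ≠ n) :
    DifferentiableAt ℝ eps1 x ∧ DifferentiableAt ℝ phi2 x ∧
      deriv eps1 x = (1 - deriv phi2 x) ^ 2 := by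
  have heps1 := hasDerivAt_eps1 (hxi ⌊x⌋)
  have hphi2 := hasDerivAt_phi2 (hxi ⌊x⌋)
  refine ⟨heps1.differentiableAt, hphi2.differentiableAt, ?_⟩
  rw [heps1.deriv, hphi2.deriv, sub_sub_cancel]

/-- For every real `x > 0` which is not an integer, `ε₁` and `φ₂` are differentiable
at `x` and `ε₁'(x) = (1 - φ₂'(x))²`. -/
theorem eps1_deriv (x : ℝ) (hx : 0 < x) (hxi : ∀ n : ℤ, x ≠ n) :
    DifferentiableAt ℝ eps1 x ∧ DifferentiableAt ℝ phi2 x ∧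
      deriv eps1 x = (1 - deriv phi2 x) ^ 2 :=
  eps1_deriv_general x hxi
end

section
/- For every real number x ≥ 1, one has |m₁(x)| ≤ x^{−2} ∫_1^x |M(t)| dt + 8/(3x). -/
/-- `M(x) = ∑_{n ≤ x} μ(n)`. -/
noncomputable def Mobius_M (x : ℝ) : ℝ :=
  ∑ n ∈ Finset.Icc 1 ⌊x⌋₊, (ArithmeticFunction.moebius n : ℝ)

/-- `m₁(x) = ∑_{n ≤ x} μ(n) (1/n - 1/x)`. -/
noncomputable def Mobius_m1 (x : ℝ) : ℝ :=
  ∑ n ∈ Finset.Icc 1 ⌊x⌋₊, (ArithmeticFunction.moebius n : ℝ) * (1 / n - 1 / x)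

/-!
By Abel summation, `x² m₁(x) = ∫_1^x M(t) (x/t)² dt`. Let `φ` be a continuous weight vanishing on
`[1, ∞)`. If the factor `u²`, `u = x/t`, is replaced by `D(u) = ∑_{k ≤ u} k φ(k/u)`, then the
substitution `t = xv/k` in the `k`-th term and the identity `∑_{k ≤ y} M(y/k) = 1` evaluate the
integral exactly, as `x ∫_{1/x}^1 φ(v) dv`. So the cost is governed by how well `D(u)` approximates
`u²`. For `φ(v) = 4(1 - v²)` one finds `u² - D(u) = (u - N(N+1)/u)²` with `N = ⌊u⌋`, which lies
between `0` and `1`, while `∫_0^1 φ = 8/3`.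
-/

open ArithmeticFunction Finset MeasureTheory
open scoped ArithmeticFunction.Moebius ArithmeticFunction.zeta

theorem intervalIntegral_eq_of_forall_uIoo_eq_zero {E : Type*} [NormedAddCommGroup E]
    [NormedSpace ℝ E] {f : ℝ → E} {a b c : ℝ} (hb : b ∈ Set.uIcc a c)
    (hf : ∀ t ∈ Set.uIoo a b, f t = 0) :
    ∫ t in a..c, f t = ∫ t in b..c, f t := by
  have hf_ab : IntervalIntegrable f volume a b :=
    (intervalIntegrable_const (c := (0 : E))).congr_uIoo fun t ht => (hf t ht).symm
  have integral_ab : ∫ t in a..b, f t = 0 :=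
    (intervalIntegral.integral_congr_uIoo hf).trans intervalIntegral.integral_zero
  by_cases hf_bc : IntervalIntegrable f volume b c
  · rw [← intervalIntegral.integral_add_adjacent_intervals hf_ab hf_bc, integral_ab, zero_add]
  · have hf_ac : ¬IntervalIntegrable f volume a c := fun h =>
      hf_bc (h.mono_set (Set.uIcc_subset_uIcc_right hb))
    rw [intervalIntegral.integral_undef hf_ac, intervalIntegral.integral_undef hf_bc]

theorem mul_integral_mul_comp_mul_div (f : ℝ → ℝ) {φ : ℝ → ℝ} (hφ : ∀ v, 1 ≤ v → φ v = 0)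
    {k x : ℝ} (hk : 1 ≤ k) (hx : x ≠ 0) :
    k * ∫ t in 0..x, f t * φ (k * t / x) = x * ∫ v in 0..1, f (x * v / k) * φ v := by
  have hk0 : k ≠ 0 := (zero_lt_one.trans_le hk).ne'
  calc k * ∫ t in 0..x, f t * φ (k * t / x)
      = k * ∫ t in 0..x, f (x * (k / x * t) / k) * φ (k / x * t) := by
        congr! 4 with t
        · field_simp
        · rw [div_mul_eq_mul_div]
    _ = x * ∫ v in 0..k, f (x * v / k) * φ v := by
        rw [intervalIntegral.integral_comp_mul_left (fun v => f (x * v / k) * φ v)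
          (div_ne_zero hk0 hx), mul_zero, div_mul_cancel₀ k hx, smul_eq_mul]
        field_simp
    _ = x * ∫ v in 0..1, f (x * v / k) * φ v := by
        rw [intervalIntegral.integral_symm, intervalIntegral.integral_symm 1 0,
          intervalIntegral_eq_of_forall_uIoo_eq_zero (Set.mem_uIcc_of_ge zero_le_one hk)]
        intro v hv
        rw [Set.uIoo_of_ge hk] at hv
        rw [hφ v hv.1.le, mul_zero]

/-- The dilation sum `∑_{k ≤ u} k φ(k/u)`, an approximation to `u² ∫_0^1 v φ(v) dv`. -/
noncomputable def dilationSum (φ : ℝ → ℝ) (u : ℝ) : ℝ :=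
  ∑ k ∈ Icc 1 ⌊u⌋₊, k * φ (k / u)

theorem dilationSum_eq_sum_Icc {φ : ℝ → ℝ} (hφ : ∀ v, 1 ≤ v → φ v = 0) {u : ℝ} (hu : 0 < u)
    {N : ℕ} (hN : ⌊u⌋₊ ≤ N) : dilationSum φ u = ∑ k ∈ Icc 1 N, k * φ (k / u) := by
  refine sum_subset (Icc_subset_Icc_right hN) fun k hkN hk => ?_
  have huk : u < k := (Nat.floor_lt hu.le).1 (by simp only [mem_Icc] at hkN hk; lia)
  rw [hφ _ ((one_le_div hu).2 huk.le), mul_zero]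

theorem dilationSum_div_eq_sum {φ : ℝ → ℝ} (hφ : ∀ v, 1 ≤ v → φ v = 0) {x t : ℝ}
    (ht : t ∈ Set.Icc 1 x) :
    dilationSum φ (x / t) = ∑ k ∈ Icc 1 ⌊x⌋₊, k * φ (k * t / x) := by
  have ht0 : 0 < t := zero_lt_one.trans_le ht.1
  have hx0 : 0 < x := ht0.trans_le ht.2
  simp only [dilationSum_eq_sum_Icc hφ (div_pos hx0 ht0)
    (Nat.floor_le_floor (div_le_self hx0.le ht.1)), div_div_eq_mul_div]

theorem continuousOn_dilationSum_div {φ : ℝ → ℝ} (hφ : Continuous φ)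
    (hφ_one : ∀ v, 1 ≤ v → φ v = 0) (x : ℝ) :
    ContinuousOn (fun t => dilationSum φ (x / t)) (Set.Icc 1 x) := by
  refine ContinuousOn.congr (f := fun t => ∑ k ∈ Icc 1 ⌊x⌋₊, k * φ (k * t / x)) ?_
    fun t ht => dilationSum_div_eq_sum hφ_one ht
  fun_prop

theorem Mobius_M_eq_zero {x : ℝ} (hx : x < 1) : Mobius_M x = 0 := by
  simp [Mobius_M, Nat.floor_eq_zero.2 hx]

theorem Mobius_M_eq_sum_Icc_zero (x : ℝ) : Mobius_M x = ∑ n ∈ Icc 0 ⌊x⌋₊, (μ n : ℝ) := by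
  rw [← add_sum_Ioc_eq_sum_Icc (Nat.zero_le _)]
  simp [Mobius_M, ← Icc_add_one_left_eq_Ioc]

theorem intervalIntegrable_Mobius_M {a b : ℝ} (ha : 0 ≤ a) (hb : 0 ≤ b) :
    IntervalIntegrable Mobius_M volume a b := by
  have h := locallyIntegrableOn_mul_sum_Icc (fun n => (μ n : ℝ)) (m := 1) le_rfl
    ((locallyIntegrable_const (1 : ℝ)).locallyIntegrableOn (Set.Ici 0))
  simp only [one_mul] at h
  exact (h.integrableOn_compact_subset (Set.ordConnected_Ici.uIcc_subset ha hb)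
    isCompact_uIcc).intervalIntegrable

theorem intervalIntegrable_Mobius_M_mul_div {x k : ℝ} (hx : 0 < x) (hk : 0 < k) :
    IntervalIntegrable (fun v => Mobius_M (x * v / k)) volume 0 1 := by
  have hc : 0 < x / k := div_pos hx hk
  simpa only [zero_div, div_self hc.ne', div_mul_eq_mul_div] using
    (intervalIntegrable_Mobius_M le_rfl hc.le).comp_mul_left (c := x / k)

theorem sum_Mobius_M_div {y : ℝ} (hy : 1 ≤ y) : ∑ k ∈ Icc 1 ⌊y⌋₊, Mobius_M (y / k) = 1 := by
  have one_le_floor : 1 ≤ ⌊y⌋₊ := Nat.one_le_floor_iff y |>.2 hy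
  calc ∑ k ∈ Icc 1 ⌊y⌋₊, Mobius_M (y / k)
      = ∑ k ∈ Ioc 0 ⌊y⌋₊, (ζ : ArithmeticFunction ℝ) k *
          ∑ n ∈ Ioc 0 (⌊y⌋₊ / k), (μ : ArithmeticFunction ℝ) n := by
        refine sum_congr rfl fun k hk => ?_
        have hk0 : k ≠ 0 := Nat.one_le_iff_ne_zero.1 (mem_Icc.1 hk).1
        simp [Mobius_M, Nat.floor_div_natCast, hk0, ← Icc_add_one_left_eq_Ioc]
    _ = ∑ n ∈ Ioc 0 ⌊y⌋₊, (1 : ArithmeticFunction ℝ) n := by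
        rw [← sum_Ioc_mul_eq_sum_sum, coe_zeta_mul_coe_moebius]
    _ = 1 := by simp [one_apply, one_le_floor]

theorem sum_Mobius_M_div_of_floor_le {y : ℝ} (hy : 1 ≤ y) {N : ℕ} (hN : ⌊y⌋₊ ≤ N) :
    ∑ k ∈ Icc 1 N, Mobius_M (y / k) = 1 := by
  rw [← sum_Mobius_M_div hy]
  refine (sum_subset (Icc_subset_Icc_right hN) fun k hkN hk => ?_).symm
  have hk1 : 1 ≤ k := (mem_Icc.1 hkN).1
  have hyk : y < k := (Nat.floor_lt (by linarith)).1 (by simp only [mem_Icc] at hkN hk; lia)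
  exact Mobius_M_eq_zero ((div_lt_one (by positivity)).2 hyk)

theorem Mobius_m1_eq_integral {x : ℝ} (hx : 1 ≤ x) :
    Mobius_m1 x = ∫ t in 1..x, Mobius_M t / t ^ 2 := by
  have ne_zero {t : ℝ} (ht : t ∈ Set.Icc 1 x) : t ≠ 0 := (zero_lt_one.trans_le ht.1).ne'
  have deriv_eq : deriv (fun t : ℝ => 1 / t - 1 / x) = fun t => -(t ^ 2)⁻¹ := by
    ext t
    simp
  have differentiable : ∀ t ∈ Set.Icc 1 x, DifferentiableAt ℝ (fun t => 1 / t - 1 / x) t :=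
    fun t ht => by
      have ht0 := ne_zero ht
      fun_prop (disch := assumption)
  have integrable_deriv : IntegrableOn (deriv fun t : ℝ => 1 / t - 1 / x) (Set.Icc 1 x) := by
    rw [deriv_eq]
    refine ContinuousOn.integrableOn_Icc fun t ht => ?_
    have ht0 := ne_zero ht
    fun_prop (disch := positivity)
  have abel := sum_mul_eq_sub_integral_mul₀ (fun n => (μ n : ℝ)) (by simp) x differentiable
    integrable_deriv
  simp only [sub_self, zero_mul, zero_sub, deriv_eq, ← Mobius_M_eq_sum_Icc_zero,
    ← intervalIntegral.integral_of_le hx, neg_mul, intervalIntegral.integral_neg, neg_neg] at abel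
  rw [← add_sum_Ioc_eq_sum_Icc (Nat.zero_le _)] at abel
  simpa [Mobius_m1, ← Icc_add_one_left_eq_Ioc, mul_comm, div_eq_inv_mul] using abel

theorem integral_sum_Mobius_M_div_mul (φ : ℝ → ℝ) {x : ℝ} (hx : 1 ≤ x) :
    ∫ v in 0..1, (∑ k ∈ Icc 1 ⌊x⌋₊, Mobius_M (x * v / k)) * φ v = ∫ v in 1 / x..1, φ v := by
  have hx0 : 0 < x := zero_lt_one.trans_le hx
  have hx_inv : 1 / x ≤ 1 := (div_le_one hx0).2 hx
  rw [intervalIntegral_eq_of_forall_uIoo_eq_zero (b := 1 / x)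
    (Set.mem_uIcc_of_le (by positivity) hx_inv)]
  · refine intervalIntegral.integral_congr fun v hv => ?_
    rw [Set.uIcc_of_le hx_inv] at hv
    have one_le : 1 ≤ x * v := (div_le_iff₀' hx0).1 hv.1
    have le_x : x * v ≤ x := mul_le_of_le_one_right hx0.le hv.2
    simp only [sum_Mobius_M_div_of_floor_le one_le (Nat.floor_le_floor le_x), one_mul]
  · intro v hv
    rw [Set.uIoo_of_le (by positivity)] at hv
    have lt_one : x * v < 1 := (lt_div_iff₀' hx0).1 hv.2
    rw [sum_eq_zero fun k hk => Mobius_M_eq_zero ?_, zero_mul]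
    have hk1 : (1 : ℝ) ≤ k := by exact_mod_cast (mem_Icc.1 hk).1
    exact (div_lt_one (by positivity)).2 (lt_one.trans_le hk1)

theorem integral_Mobius_M_mul_dilationSum {φ : ℝ → ℝ} (hφ : Continuous φ)
    (hφ_one : ∀ v, 1 ≤ v → φ v = 0) {x : ℝ} (hx : 1 ≤ x) :
    ∫ t in 1..x, Mobius_M t * dilationSum φ (x / t) = x * ∫ v in 1 / x..1, φ v := by
  have hx0 : 0 < x := zero_lt_one.trans_le hx
  calc ∫ t in 1..x, Mobius_M t * dilationSum φ (x / t)
      = ∫ t in 1..x, Mobius_M t * ∑ k ∈ Icc 1 ⌊x⌋₊, k * φ (k * t / x) := by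
        refine intervalIntegral.integral_congr fun t ht => ?_
        rw [Set.uIcc_of_le hx] at ht
        simp only [dilationSum_div_eq_sum hφ_one ht]
    _ = ∫ t in 0..x, Mobius_M t * ∑ k ∈ Icc 1 ⌊x⌋₊, k * φ (k * t / x) := by
        refine (intervalIntegral_eq_of_forall_uIoo_eq_zero
          (Set.mem_uIcc_of_le zero_le_one hx) fun t ht => ?_).symm
        rw [Set.uIoo_of_le zero_le_one] at ht
        rw [Mobius_M_eq_zero ht.2, zero_mul]
    _ = ∑ k ∈ Icc 1 ⌊x⌋₊, k * ∫ t in 0..x, Mobius_M t * φ (k * t / x) := by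
        simp only [mul_sum, mul_left_comm (Mobius_M _)]
        rw [intervalIntegral.integral_finsetSum fun k _ =>
          ((intervalIntegrable_Mobius_M le_rfl hx0.le).mul_continuousOn (by fun_prop)).const_mul _]
        simp only [intervalIntegral.integral_const_mul]
    _ = ∑ k ∈ Icc 1 ⌊x⌋₊, x * ∫ v in 0..1, Mobius_M (x * v / k) * φ v :=
        sum_congr rfl fun k hk => mul_integral_mul_comp_mul_div _ hφ_one
          (by exact_mod_cast (mem_Icc.1 hk).1) hx0.ne'
    _ = x * ∫ v in 0..1, (∑ k ∈ Icc 1 ⌊x⌋₊, Mobius_M (x * v / k)) * φ v := by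
        simp only [sum_mul]
        rw [intervalIntegral.integral_finsetSum fun k hk =>
          (intervalIntegrable_Mobius_M_mul_div hx0
            (by exact_mod_cast (mem_Icc.1 hk).1)).mul_continuousOn hφ.continuousOn, mul_sum]
    _ = x * ∫ v in 1 / x..1, φ v := by rw [integral_sum_Mobius_M_div_mul φ hx]

theorem sq_mul_Mobius_m1_eq {φ : ℝ → ℝ} (hφ : Continuous φ) (hφ_one : ∀ v, 1 ≤ v → φ v = 0)
    {x : ℝ} (hx : 1 ≤ x) :
    x ^ 2 * Mobius_m1 x =
      (∫ t in 1..x, Mobius_M t * ((x / t) ^ 2 - dilationSum φ (x / t))) +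
        x * ∫ v in 1 / x..1, φ v := by
  have hM : IntervalIntegrable Mobius_M volume 1 x :=
    intervalIntegrable_Mobius_M zero_le_one (zero_le_one.trans hx)
  have hsq : ContinuousOn (fun t => (x / t) ^ 2) (Set.uIcc 1 x) := by
    intro t ht
    rw [Set.uIcc_of_le hx] at ht
    have ht0 : t ≠ 0 := (zero_lt_one.trans_le ht.1).ne'
    fun_prop (disch := assumption)
  have hsum : ContinuousOn (fun t => dilationSum φ (x / t)) (Set.uIcc 1 x) := by
    rw [Set.uIcc_of_le hx]
    exact continuousOn_dilationSum_div hφ hφ_one x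
  have hm1 : ∫ t in 1..x, Mobius_M t * (x / t) ^ 2 = x ^ 2 * Mobius_m1 x := by
    rw [Mobius_m1_eq_integral hx, ← intervalIntegral.integral_const_mul]
    simp only [div_pow, mul_div_left_comm]
  simp only [mul_sub]
  rw [intervalIntegral.integral_sub (hM.mul_continuousOn hsq) (hM.mul_continuousOn hsum), hm1,
    integral_Mobius_M_mul_dilationSum hφ hφ_one hx, sub_add_cancel]

theorem abs_Mobius_m1_le {φ : ℝ → ℝ} (hφ : Continuous φ) (hφ_one : ∀ v, 1 ≤ v → φ v = 0)
    {C x : ℝ} (hx : 1 ≤ x) (hC : ∀ u ∈ Set.Icc 1 x, |u ^ 2 - dilationSum φ u| ≤ C) :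
    |Mobius_m1 x| ≤
      1 / x ^ 2 * (C * ∫ t in 1..x, |Mobius_M t|) + 1 / x * |∫ v in 1 / x..1, φ v| := by
  have hx0 : 0 < x := zero_lt_one.trans_le hx
  have hM : IntervalIntegrable Mobius_M volume 1 x :=
    intervalIntegrable_Mobius_M zero_le_one hx0.le
  have kernel_bound :
      |∫ t in 1..x, Mobius_M t * ((x / t) ^ 2 - dilationSum φ (x / t))| ≤
        C * ∫ t in 1..x, |Mobius_M t| := by
    rw [← intervalIntegral.integral_const_mul, ← Real.norm_eq_abs]
    refine intervalIntegral.norm_integral_le_of_norm_le hx (.of_forall fun t ht => ?_)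
      (hM.abs.const_mul C)
    have ht0 : 0 < t := zero_lt_one.trans ht.1
    rw [norm_mul, mul_comm]
    exact mul_le_mul_of_nonneg_right
      (hC _ ⟨(one_le_div ht0).2 ht.2, div_le_self hx0.le ht.1.le⟩) (norm_nonneg _)
  have sq_mul_bound : x ^ 2 * |Mobius_m1 x| ≤
      C * (∫ t in 1..x, |Mobius_M t|) + x * |∫ v in 1 / x..1, φ v| := by
    rw [← abs_of_pos (pow_pos hx0 2), ← abs_mul, sq_mul_Mobius_m1_eq hφ hφ_one hx]
    refine (abs_add_le _ _).trans (add_le_add kernel_bound ?_)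
    rw [abs_mul, abs_of_pos hx0]
  calc |Mobius_m1 x|
      ≤ (C * (∫ t in 1..x, |Mobius_M t|) + x * |∫ v in 1 / x..1, φ v|) / x ^ 2 :=
        (le_div_iff₀' (by positivity)).2 sq_mul_bound
    _ = 1 / x ^ 2 * (C * ∫ t in 1..x, |Mobius_M t|) + 1 / x * |∫ v in 1 / x..1, φ v| := by
        field_simp

/-- The weight `4(1 - v²)` on `[-1, 1]`, continued by `0`. The factor `4` gives
`∫_0^1 v φ(v) dv = 1`, so that its dilation sum at `u` is close to `u²`. -/
noncomputable def parabolicWeight (v : ℝ) : ℝ :=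
  max (4 * (1 - v ^ 2)) 0

theorem continuous_parabolicWeight : Continuous parabolicWeight := by
  unfold parabolicWeight
  fun_prop

theorem parabolicWeight_eq_zero {v : ℝ} (hv : 1 ≤ v) : parabolicWeight v = 0 :=
  max_eq_right (by nlinarith)

theorem parabolicWeight_of_mem_Icc {v : ℝ} (hv : v ∈ Set.Icc 0 1) :
    parabolicWeight v = 4 * (1 - v ^ 2) :=
  max_eq_left (by nlinarith [hv.1, hv.2])

theorem sum_Icc_mul_four_mul_one_sub_div_sq {K : Type*} [Field K] {u : K} (hu : u ≠ 0) (N : ℕ) :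
    ∑ k ∈ Icc 1 N, (k : K) * (4 * (1 - (k / u) ^ 2)) =
      u ^ 2 - (u - N * (N + 1) / u) ^ 2 := by
  induction N with
  | zero => simp
  | succ N ih =>
    rw [sum_Icc_succ_top (by lia), ih]
    push_cast
    field_simp
    ring

theorem sq_sub_dilationSum_parabolicWeight {u : ℝ} (hu : 0 < u) :
    u ^ 2 - dilationSum parabolicWeight u = (u - ⌊u⌋₊ * (⌊u⌋₊ + 1) / u) ^ 2 := by
  rw [sub_eq_iff_eq_add', ← sub_eq_iff_eq_add, ← sum_Icc_mul_four_mul_one_sub_div_sq hu.ne']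
  refine (sum_congr rfl fun k hk => ?_).symm
  have hku : (k : ℝ) ≤ u := (Nat.le_floor_iff hu.le).1 (mem_Icc.1 hk).2
  rw [parabolicWeight_of_mem_Icc ⟨by positivity, (div_le_one hu).2 hku⟩]

theorem abs_sub_floor_mul_floor_add_one_div_le {u : ℝ} (hu : 0 < u) :
    |u - ⌊u⌋₊ * (⌊u⌋₊ + 1) / u| ≤ 1 := by
  have floor_le : (⌊u⌋₊ : ℝ) ≤ u := Nat.floor_le hu.le
  have lt_floor : u < ⌊u⌋₊ + 1 := Nat.lt_floor_add_one u
  have lower : (u - 1) * u ≤ ⌊u⌋₊ * (⌊u⌋₊ + 1) := by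
    gcongr
    linarith
  have upper : (⌊u⌋₊ : ℝ) * (⌊u⌋₊ + 1) ≤ (u + 1) * u := by
    rw [mul_comm (u + 1)]
    gcongr
  rw [abs_sub_le_iff, sub_le_comm, le_div_iff₀ hu, sub_le_iff_le_add', div_le_iff₀ hu]
  exact ⟨lower, upper⟩

theorem abs_sq_sub_dilationSum_parabolicWeight_le {u : ℝ} (hu : 0 < u) :
    |u ^ 2 - dilationSum parabolicWeight u| ≤ 1 := by
  rw [sq_sub_dilationSum_parabolicWeight hu, abs_sq, sq_le_one_iff_abs_le_one]
  exact abs_sub_floor_mul_floor_add_one_div_le hu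

theorem abs_integral_parabolicWeight_le {a : ℝ} (ha : a ∈ Set.Icc 0 1) :
    |∫ v in a..1, parabolicWeight v| ≤ 8 / 3 := by
  have integral_eq : ∫ v in 0..1, parabolicWeight v = 8 / 3 := by
    have polynomial_on : Set.EqOn parabolicWeight (fun v => 4 * (1 - v ^ 2)) (Set.uIcc 0 1) := by
      rw [Set.uIcc_of_le zero_le_one]
      exact fun v => parabolicWeight_of_mem_Icc
    rw [intervalIntegral.integral_congr polynomial_on, intervalIntegral.integral_const_mul,
      intervalIntegral.integral_sub (by simp) (by simp), integral_pow]
    norm_num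
  have nonneg (v : ℝ) : 0 ≤ parabolicWeight v := le_max_right _ _
  rw [abs_of_nonneg (intervalIntegral.integral_nonneg ha.2 fun v _ => nonneg v), ← integral_eq]
  exact intervalIntegral.integral_mono_interval ha.1 ha.2 le_rfl (.of_forall nonneg)
    (continuous_parabolicWeight.intervalIntegrable _ _)

/-- For every real `x ≥ 1`, `|m₁(x)| ≤ x⁻² ∫_1^x |M(t)| dt + 8/(3x)`. -/
theorem m1_bound' (x : ℝ) (hx : 1 ≤ x) :
    |Mobius_m1 x| ≤ (1 / x ^ 2) * (∫ t in (1 : ℝ)..x, |Mobius_M t|) + 8 / (3 * x) := by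
  have hx0 : 0 < x := zero_lt_one.trans_le hx
  calc |Mobius_m1 x|
      ≤ 1 / x ^ 2 * (1 * ∫ t in (1 : ℝ)..x, |Mobius_M t|) +
          1 / x * |∫ v in 1 / x..1, parabolicWeight v| :=
        abs_Mobius_m1_le continuous_parabolicWeight (fun _ => parabolicWeight_eq_zero) hx
          fun _ hu => abs_sq_sub_dilationSum_parabolicWeight_le (zero_lt_one.trans_le hu.1)
    _ ≤ 1 / x ^ 2 * (1 * ∫ t in (1 : ℝ)..x, |Mobius_M t|) + 1 / x * (8 / 3) := by
        gcongr
        exact abs_integral_parabolicWeight_le ⟨by positivity, (div_le_one hx0).2 hx⟩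
    _ = 1 / x ^ 2 * (∫ t in (1 : ℝ)..x, |Mobius_M t|) + 8 / (3 * x) := by
        field_simp
end

section
/- For every real number x ≥ 1, one has −γ ≤ ∑_{n ≤ x} (μ(n)/n) log(x/n) ≤ 2 + γ, where γ is the Euler–Mascheroni constant and the sum is over positive integers n ≤ x. -/
/-!
Write `H` for the harmonic numbers and `m = ∑_{n ≤ x} μ(n)/n`. Möbius inversion gives
both `∑_{n ≤ x} μ(n) ⌊x/n⌋ = 1`, which bounds `|m|` by `1`, and `∑_{n ≤ x} (μ(n)/n) H(⌊x/n⌋) = 1`.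
Replacing `H(⌊y⌋)` by `log y + γ` costs at most `1/y`, so it changes the latter sum by at most
`∑_{n ≤ x} (1/n)(n/x) = ⌊x⌋/x ≤ 1`. Hence the sum of the theorem is within `1` of `1 - γ m`.
-/

open Finset
open scoped ArithmeticFunction.Moebius

theorem sum_Icc_sum_Icc_div_eq_sum_divisorsAntidiagonal {M : Type*} [AddCommMonoid M]
    (N : ℕ) (f : ℕ → ℕ → M) :
    ∑ d ∈ Icc 1 N, ∑ m ∈ Icc 1 (N / d), f d m =
      ∑ n ∈ Icc 1 N, ∑ p ∈ n.divisorsAntidiagonal, f p.1 p.2 := by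
  rw [sum_sigma', sum_sigma']
  refine sum_bij' (fun p _ ↦ ⟨p.1 * p.2, (p.1, p.2)⟩) (fun q _ ↦ ⟨q.2.1, q.2.2⟩) ?_ ?_ ?_ ?_ ?_
  · rintro ⟨d, m⟩ hdm
    simp only [mem_sigma, mem_Icc, Nat.mem_divisorsAntidiagonal] at hdm ⊢
    obtain ⟨⟨hd, -⟩, hm, hmN⟩ := hdm
    have hpos : 0 < d * m := Nat.mul_pos hd hm
    have hdmN : d * m ≤ N := mul_comm m d ▸ (Nat.le_div_iff_mul_le hd).1 hmN
    exact ⟨⟨hpos, hdmN⟩, trivial, hpos.ne'⟩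
  · rintro ⟨n, d, m⟩ hn
    simp only [mem_sigma, mem_Icc, Nat.mem_divisorsAntidiagonal] at hn ⊢
    obtain ⟨⟨hn, hnN⟩, rfl, -⟩ := hn
    have hd : 0 < d := Nat.pos_of_mul_pos_right hn
    have hm : 0 < m := Nat.pos_of_mul_pos_left hn
    have hmN : m ≤ N / d := (Nat.le_div_iff_mul_le hd).2 (mul_comm d m ▸ hnN)
    exact ⟨⟨hd, (Nat.le_mul_of_pos_right d hm).trans hnN⟩, hm, hmN⟩
  · simp
  · rintro ⟨n, d, m⟩ hn
    simp only [mem_sigma, Nat.mem_divisorsAntidiagonal] at hn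
    obtain ⟨-, rfl, -⟩ := hn
    rfl
  · simp

theorem sum_divisors_moebius (n : ℕ) : ∑ d ∈ n.divisors, μ d = if n = 1 then 1 else 0 := by
  rw [← ArithmeticFunction.coe_mul_zeta_apply, ArithmeticFunction.moebius_mul_coe_zeta,
    ArithmeticFunction.one_apply]

theorem sum_moebius_smul_sum_mul {M : Type*} [AddCommGroup M] {N : ℕ} (hN : N ≠ 0) (g : ℕ → M) :
    ∑ d ∈ Icc 1 N, μ d • ∑ m ∈ Icc 1 (N / d), g (d * m) = g 1 := by
  have inner (n : ℕ) :
      ∑ p ∈ n.divisorsAntidiagonal, μ p.1 • g (p.1 * p.2) = if n = 1 then g n else 0 := by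
    calc ∑ p ∈ n.divisorsAntidiagonal, μ p.1 • g (p.1 * p.2)
        = ∑ p ∈ n.divisorsAntidiagonal, μ p.1 • g n :=
          sum_congr rfl fun p hp ↦ by rw [(Nat.mem_divisorsAntidiagonal.1 hp).1]
      _ = (∑ d ∈ n.divisors, μ d) • g n := by
          rw [Nat.sum_divisorsAntidiagonal (fun d _ ↦ μ d • g n), sum_smul]
      _ = if n = 1 then g n else 0 := by rw [sum_divisors_moebius, ite_smul, one_smul, zero_smul]
  simp_rw [smul_sum]
  rw [sum_Icc_sum_Icc_div_eq_sum_divisorsAntidiagonal N fun d m ↦ μ d • g (d * m),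
    sum_congr rfl fun n _ ↦ inner n, sum_ite_eq', if_pos]
  exact mem_Icc.2 ⟨le_rfl, Nat.one_le_iff_ne_zero.2 hN⟩

theorem sum_moebius_mul_div {R : Type*} [Ring R] {N : ℕ} (hN : N ≠ 0) :
    ∑ n ∈ Icc 1 N, (μ n : R) * (N / n : ℕ) = 1 := by
  simpa using sum_moebius_smul_sum_mul hN fun _ ↦ (1 : R)

theorem sum_moebius_div_mul_harmonic {N : ℕ} (hN : N ≠ 0) :
    ∑ n ∈ Icc 1 N, (μ n : ℚ) / n * harmonic (N / n) = 1 := by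
  calc ∑ n ∈ Icc 1 N, (μ n : ℚ) / n * harmonic (N / n)
      = ∑ n ∈ Icc 1 N, μ n • ∑ m ∈ Icc 1 (N / n), ((n * m : ℕ) : ℚ)⁻¹ := by
        refine sum_congr rfl fun n _ ↦ ?_
        simp only [Nat.cast_mul, mul_inv, ← mul_sum]
        rw [harmonic_eq_sum_Icc, zsmul_eq_mul, div_eq_mul_inv, mul_assoc]
    _ = 1 := by rw [sum_moebius_smul_sum_mul hN fun k ↦ (k : ℚ)⁻¹, Nat.cast_one, inv_one]

theorem abs_moebius_cast_le_one (n : ℕ) : |(μ n : ℝ)| ≤ 1 :=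
  mod_cast ArithmeticFunction.abs_moebius_le_one

theorem sum_fract_div_le {x : ℝ} (hx : 1 ≤ x) :
    ∑ n ∈ Icc 1 ⌊x⌋₊, Int.fract (x / n) ≤ x - 1 := by
  have hN : 1 ≤ ⌊x⌋₊ := (Nat.one_le_floor_iff x).2 hx
  calc ∑ n ∈ Icc 1 ⌊x⌋₊, Int.fract (x / n)
      = Int.fract x + ∑ n ∈ Ioc 1 ⌊x⌋₊, Int.fract (x / n) := by
        rw [← add_sum_Ioc_eq_sum_Icc hN, Nat.cast_one, div_one]
    _ ≤ (x - ⌊x⌋₊) + ∑ _n ∈ Ioc 1 ⌊x⌋₊, (1 : ℝ) := by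
        rw [natCast_floor_eq_intCast_floor (zero_le_one.trans hx), Int.self_sub_floor]
        gcongr
        exact (Int.fract_lt_one _).le
    _ = x - 1 := by
        rw [sum_const, Nat.card_Ioc, nsmul_one, Nat.cast_sub hN, Nat.cast_one]
        ring

theorem abs_sum_mul_fract_div_le {f : ℕ → ℝ} (hf : ∀ n, |f n| ≤ 1) {x : ℝ} (hx : 1 ≤ x) :
    |∑ n ∈ Icc 1 ⌊x⌋₊, f n * Int.fract (x / n)| ≤ x - 1 := by
  refine (abs_sum_le_sum_abs _ _).trans ((sum_le_sum fun n _ ↦ ?_).trans (sum_fract_div_le hx))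
  rw [abs_mul, Int.abs_fract]
  exact mul_le_of_le_one_left (Int.fract_nonneg _) (hf n)

theorem abs_sum_moebius_div_le_one (N : ℕ) : |∑ n ∈ Icc 1 N, (μ n : ℝ) / n| ≤ 1 := by
  rcases eq_or_ne N 0 with rfl | hN
  · simp
  have hN1 : (1 : ℝ) ≤ N := mod_cast Nat.one_le_iff_ne_zero.2 hN
  have hfloor : ∑ n ∈ Icc 1 N, (μ n : ℝ) * (N / n : ℕ) = 1 := sum_moebius_mul_div hN
  have hfract : |∑ n ∈ Icc 1 N, (μ n : ℝ) * Int.fract ((N : ℝ) / n)| ≤ N - 1 := by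
    simpa using abs_sum_mul_fract_div_le abs_moebius_cast_le_one hN1
  have hsplit : N * ∑ n ∈ Icc 1 N, (μ n : ℝ) / n =
      1 + ∑ n ∈ Icc 1 N, (μ n : ℝ) * Int.fract ((N : ℝ) / n) := by
    rw [← hfloor, mul_sum, ← sum_add_distrib]
    refine sum_congr rfl fun n _ ↦ ?_
    rw [← Nat.floor_div_eq_div (K := ℝ), natCast_floor_eq_intCast_floor (by positivity),
      ← mul_add, Int.floor_add_fract]
    ring
  refine le_of_mul_le_mul_left ?_ (zero_lt_one.trans_le hN1)
  calc N * |∑ n ∈ Icc 1 N, (μ n : ℝ) / n|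
      = |1 + ∑ n ∈ Icc 1 N, (μ n : ℝ) * Int.fract ((N : ℝ) / n)| := by
        rw [← hsplit, abs_mul, Nat.abs_cast]
    _ ≤ |1| + |∑ n ∈ Icc 1 N, (μ n : ℝ) * Int.fract ((N : ℝ) / n)| := abs_add_le _ _
    _ ≤ N * 1 := by rw [abs_one]; linarith

theorem abs_harmonic_floor_sub_log_sub_eulerMascheroniConstant_le {y : ℝ} (hy : 0 < y) :
    |(harmonic ⌊y⌋₊ : ℝ) - Real.log y - Real.eulerMascheroniConstant| ≤ 1 / y := by
  set N := ⌊y⌋₊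
  have hNy : (N : ℝ) ≤ y := Nat.floor_le hy.le
  have hyN : y < N + 1 := Nat.lt_floor_add_one y
  have hγ_lower : harmonic N - Real.log (N + 1) < Real.eulerMascheroniConstant :=
    Real.eulerMascheroniSeq_lt_eulerMascheroniConstant N
  have hγ_upper : Real.eulerMascheroniConstant <
      harmonic N + ((N : ℝ) + 1)⁻¹ - Real.log (N + 1) := by
    simpa [Real.eulerMascheroniSeq', harmonic_succ] using
      Real.eulerMascheroniConstant_lt_eulerMascheroniSeq' (N + 1)
  have hinv : ((N : ℝ) + 1)⁻¹ ≤ 1 / y := by rw [← one_div]; gcongr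
  have hlog_mono : Real.log y ≤ Real.log (N + 1) := Real.log_le_log hy hyN.le
  have hlog_sub : Real.log (N + 1) - Real.log y ≤ 1 / y := calc
    Real.log (N + 1) - Real.log y = Real.log ((N + 1) / y) :=
      (Real.log_div (by positivity) hy.ne').symm
    _ ≤ (N + 1) / y - 1 := Real.log_le_sub_one_of_pos (by positivity)
    _ = (N + 1 - y) / y := div_sub_one hy.ne'
    _ ≤ 1 / y := by gcongr; linarith
  rw [abs_le]
  constructor <;> linarith

theorem abs_sum_div_mul_harmonic_floor_sub_le_one {f : ℕ → ℝ} (hf : ∀ n, |f n| ≤ 1)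
    {x : ℝ} (hx : 0 < x) :
    |∑ n ∈ Icc 1 ⌊x⌋₊, f n / n *
      ((harmonic ⌊x / n⌋₊ : ℝ) - Real.log (x / n) - Real.eulerMascheroniConstant)| ≤ 1 := by
  calc _ ≤ ∑ n ∈ Icc 1 ⌊x⌋₊, 1 / x := by
        refine (abs_sum_le_sum_abs _ _).trans (sum_le_sum fun n hn ↦ ?_)
        have hn_pos : (0 : ℝ) < n := mod_cast (mem_Icc.1 hn).1
        rw [abs_mul, abs_div, abs_of_pos hn_pos]
        calc _ ≤ 1 / (n : ℝ) * (1 / (x / n)) := by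
              gcongr
              · exact hf n
              · exact abs_harmonic_floor_sub_log_sub_eulerMascheroniConstant_le (div_pos hx hn_pos)
          _ = 1 / x := by field_simp
    _ = ⌊x⌋₊ / x := by simp [div_eq_mul_inv]
    _ ≤ 1 := div_le_one_of_le₀ (Nat.floor_le hx.le) hx.le

/-- **von Mangoldt's encadrement** (1897): for every real `x ≥ 1`,
`-γ ≤ ∑_{n ≤ x} (μ(n)/n) log(x/n) ≤ 2 + γ`. -/
theorem vonMangoldt_encadrement (x : ℝ) (hx : 1 ≤ x) :
    -Real.eulerMascheroniConstant
        ≤ ∑ n ∈ Finset.Icc 1 ⌊x⌋₊, (ArithmeticFunction.moebius n : ℝ) / n * Real.log (x / n) ∧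
      ∑ n ∈ Finset.Icc 1 ⌊x⌋₊, (ArithmeticFunction.moebius n : ℝ) / n * Real.log (x / n)
        ≤ 2 + Real.eulerMascheroniConstant := by
  have hharmonic : ∑ n ∈ Icc 1 ⌊x⌋₊, (μ n : ℝ) / n * (harmonic ⌊x / n⌋₊ : ℝ) = 1 := by
    simp_rw [Nat.floor_div_natCast]
    exact_mod_cast sum_moebius_div_mul_harmonic (Nat.floor_pos.2 hx).ne'
  have herror := abs_sum_div_mul_harmonic_floor_sub_le_one abs_moebius_cast_le_one
    (zero_lt_one.trans_le hx)
  simp only [mul_sub, sum_sub_distrib, ← sum_mul, hharmonic] at herror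
  have hγm : |(∑ n ∈ Icc 1 ⌊x⌋₊, (μ n : ℝ) / n) * Real.eulerMascheroniConstant| ≤
      Real.eulerMascheroniConstant := by
    have hγ : 0 < Real.eulerMascheroniConstant :=
      one_half_pos.trans Real.one_half_lt_eulerMascheroniConstant
    rw [abs_mul, abs_of_pos hγ]
    exact mul_le_of_le_one_left hγ.le (abs_sum_moebius_div_le_one _)
  rw [abs_le] at herror hγm
  constructor <;> linarith
end
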